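/- For every positive integer m, the functions μ(·, m), ν(·, m), μ*(·, m), ν*(·, m) are sublinear in their first argument: for all positive integers n₁, n₂, μ(n₁ + n₂, m) ≤ μ(n₁, m) + μ(n₂, m) and ν(n₁ + n₂, m) ≤ ν(n₁, m) + ν(n₂, m); and if moreover n₁ ≥ m and n₂ ≥ m, then μ*(n₁ + n₂, m) ≤ μ*(n₁, m) + μ*(n₂, m) and ν*(n₁ + n₂, m) ≤ ν*(n₁, m) + ν*(n₂, m). -/

import Mathlib

/-!
Given matrices `W₁`, `W₂` (and shifts `c₁`, `c₂`) attaining the two minima, the block-diagonal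
matrix `W₁ ⊕ W₂` with the concatenated shift has unit diagonal, and its columns are the columns of
`W₁` and `W₂` padded by zeros, so it lies in the same class (`bdiag_mem_Aset`,
`bdiag_mem_AstarSet`). Every vector of `𝔽₂^(n₁+n₂)` is a concatenation and Hamming weight is
additive under concatenation, so `M(W₁ ⊕ W₂, c₁ ⊕ c₂) ≤ M(W₁, c₁) + M(W₂, c₂)` (`Mfun_bdiag_le`).
The minima are attained because the classes are nonempty: the identity matrix lies in `A(n,m)`,
and for `1 ≤ m ≤ n` each singleton `{j}` extends to an `m`-subset of the index set, which serves
as the support of column `j` of a matrix in `A*(n,m)`.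
-/

open Matrix

/-- `Mfun W c` is `M(W,c)`: the maximum of `|W·x + c|` over all `x ∈ 𝔽₂ⁿ`. -/
def Mfun {n : ℕ} (W : Matrix (Fin n) (Fin n) (ZMod 2)) (c : Fin n → ZMod 2) : ℕ :=
  Finset.univ.sup fun x : Fin n → ZMod 2 => hammingNorm (W.mulVec x + c)

/-- `Aset n m`: matrices with all diagonal entries 1 and every column of Hamming weight ≤ m. -/
def Aset (n m : ℕ) : Set (Matrix (Fin n) (Fin n) (ZMod 2)) :=
  {W | (∀ i, W i i = 1) ∧ ∀ j, hammingNorm (fun i => W i j) ≤ m}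

/-- `AstarSet n m`: matrices with all diagonal entries 1 and every column of Hamming weight
exactly m. -/
def AstarSet (n m : ℕ) : Set (Matrix (Fin n) (Fin n) (ZMod 2)) :=
  {W | (∀ i, W i i = 1) ∧ ∀ j, hammingNorm (fun i => W i j) = m}

/-- `μ(n,m) = min { M(W,0) : W ∈ A(n,m) }`. -/
noncomputable def mu (n m : ℕ) : ℕ := sInf ((fun W => Mfun W 0) '' Aset n m)

/-- `μ*(n,m) = min { M(W,0) : W ∈ A*(n,m) }`. -/
noncomputable def muStar (n m : ℕ) : ℕ := sInf ((fun W => Mfun W 0) '' AstarSet n m)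

/-- `ν(n,m) = min { M(W,c) : W ∈ A(n,m), c ∈ 𝔽₂ⁿ }`. -/
noncomputable def nu (n m : ℕ) : ℕ := sInf {t | ∃ W ∈ Aset n m, ∃ c, Mfun W c = t}

/-- `ν*(n,m) = min { M(W,c) : W ∈ A*(n,m), c ∈ 𝔽₂ⁿ }`. -/
noncomputable def nuStar (n m : ℕ) : ℕ := sInf {t | ∃ W ∈ AstarSet n m, ∃ c, Mfun W c = t}

/-- The sequence `a` from the paper: `a(1)=1`, `a(2^k−1+i)=2^{k−1}+a(i)` for `1 ≤ i ≤ 2^k−1`,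
and `a(2^{k+1}−1)=2^k`.  (For `2^k ≤ n ≤ 2^{k+1}-1` we have `Nat.log2 n = k`.) -/
def aseq : ℕ → ℕ
  | 0 => 0
  | 1 => 1
  | (n+2) =>
    let k := Nat.log2 (n+2)
    if n + 2 = 2^(k+1) - 1 then 2^k
    else 2^(k-1) + aseq ((n+2) - (2^k - 1))
decreasing_by
  have hk : 1 ≤ Nat.log2 (n+2) := by
    rw [Nat.le_log2 (by omega)]
    omega
  have h2 : 2 ≤ 2 ^ Nat.log2 (n+2) := by
    calc (2:ℕ) = 2^1 := rfl
    _ ≤ _ := Nat.pow_le_pow_right (by norm_num) hk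
  omega

/-- The upper bound `U(n,m)`: with `k` such that `2^k ≤ m < 2^{k+1}` and
`n = (2^{k+1}−1)q + r`, `q ≥ 0`, `1 ≤ r ≤ 2^{k+1}−1`, set `U(n,m) = q·2^k + a(r)`. -/
def Ufun (n m : ℕ) : ℕ :=
  let k := Nat.log2 m
  let p := 2^(k+1) - 1
  ((n-1)/p) * 2^k + aseq ((n-1) % p + 1)

/-- The block-diagonal matrix `W₁ ⊕ W₂`, indexed by `Fin (n₁ + n₂)`. -/
def bdiag {n₁ n₂ : ℕ} (W₁ : Matrix (Fin n₁) (Fin n₁) (ZMod 2))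
    (W₂ : Matrix (Fin n₂) (Fin n₂) (ZMod 2)) :
    Matrix (Fin (n₁ + n₂)) (Fin (n₁ + n₂)) (ZMod 2) :=
  fun i => Fin.append (fun i₁ => Fin.append (W₁ i₁) 0) (fun i₂ => Fin.append 0 (W₂ i₂)) i

lemma hammingNorm_append {n₁ n₂ : ℕ} (x : Fin (n₁ + n₂) → ZMod 2) :
    hammingNorm x = hammingNorm (fun i => x (Fin.castAdd n₂ i))
      + hammingNorm (fun i => x (Fin.natAdd n₁ i)) := by
  simp only [hammingNorm, Finset.card_filter, Fin.sum_univ_add]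

lemma bdiag_diag {n₁ n₂ : ℕ} {W₁ : Matrix (Fin n₁) (Fin n₁) (ZMod 2)}
    {W₂ : Matrix (Fin n₂) (Fin n₂) (ZMod 2)} (h₁ : ∀ i, W₁ i i = 1) (h₂ : ∀ i, W₂ i i = 1)
    (i : Fin (n₁ + n₂)) : bdiag W₁ W₂ i i = 1 := by
  refine Fin.addCases (fun i => ?_) (fun i => ?_) i <;> simp [bdiag, h₁, h₂]

lemma bdiag_col_left {n₁ n₂ : ℕ} (W₁ : Matrix (Fin n₁) (Fin n₁) (ZMod 2))
    (W₂ : Matrix (Fin n₂) (Fin n₂) (ZMod 2)) (j : Fin n₁) :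
    hammingNorm (fun i => bdiag W₁ W₂ i (Fin.castAdd n₂ j)) = hammingNorm (fun i => W₁ i j) := by
  rw [hammingNorm_append]
  simp [bdiag, hammingNorm]

lemma bdiag_col_right {n₁ n₂ : ℕ} (W₁ : Matrix (Fin n₁) (Fin n₁) (ZMod 2))
    (W₂ : Matrix (Fin n₂) (Fin n₂) (ZMod 2)) (j : Fin n₂) :
    hammingNorm (fun i => bdiag W₁ W₂ i (Fin.natAdd n₁ j)) = hammingNorm (fun i => W₂ i j) := by
  rw [hammingNorm_append]
  simp [bdiag, hammingNorm]

lemma bdiag_mem_Aset {n₁ n₂ m : ℕ} {W₁ : Matrix (Fin n₁) (Fin n₁) (ZMod 2)}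
    {W₂ : Matrix (Fin n₂) (Fin n₂) (ZMod 2)} (h₁ : W₁ ∈ Aset n₁ m) (h₂ : W₂ ∈ Aset n₂ m) :
    bdiag W₁ W₂ ∈ Aset (n₁ + n₂) m := by
  refine ⟨bdiag_diag h₁.1 h₂.1, fun j => ?_⟩
  refine Fin.addCases (fun j => ?_) (fun j => ?_) j
  · rw [bdiag_col_left]; exact h₁.2 j
  · rw [bdiag_col_right]; exact h₂.2 j

lemma bdiag_mem_AstarSet {n₁ n₂ m : ℕ} {W₁ : Matrix (Fin n₁) (Fin n₁) (ZMod 2)}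
    {W₂ : Matrix (Fin n₂) (Fin n₂) (ZMod 2)} (h₁ : W₁ ∈ AstarSet n₁ m)
    (h₂ : W₂ ∈ AstarSet n₂ m) : bdiag W₁ W₂ ∈ AstarSet (n₁ + n₂) m := by
  refine ⟨bdiag_diag h₁.1 h₂.1, fun j => ?_⟩
  refine Fin.addCases (fun j => ?_) (fun j => ?_) j
  · rw [bdiag_col_left]; exact h₁.2 j
  · rw [bdiag_col_right]; exact h₂.2 j

lemma hammingNorm_le_Mfun {n : ℕ} (W : Matrix (Fin n) (Fin n) (ZMod 2)) (c x : Fin n → ZMod 2) :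
    hammingNorm (W.mulVec x + c) ≤ Mfun W c :=
  Finset.le_sup (f := fun x : Fin n → ZMod 2 => hammingNorm (W.mulVec x + c)) (Finset.mem_univ x)

lemma Mfun_bdiag_le {n₁ n₂ : ℕ} (W₁ : Matrix (Fin n₁) (Fin n₁) (ZMod 2))
    (W₂ : Matrix (Fin n₂) (Fin n₂) (ZMod 2)) (c₁ : Fin n₁ → ZMod 2) (c₂ : Fin n₂ → ZMod 2) :
    Mfun (bdiag W₁ W₂) (Fin.append c₁ c₂) ≤ Mfun W₁ c₁ + Mfun W₂ c₂ := by
  refine Finset.sup_le fun x _ => ?_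
  rw [hammingNorm_append]
  refine add_le_add ?_ ?_
  · refine le_trans (le_of_eq ?_) (hammingNorm_le_Mfun W₁ c₁ (fun i => x (Fin.castAdd n₂ i)))
    congr 1
    ext i
    simp [bdiag, Matrix.mulVec, dotProduct, Fin.sum_univ_add]
  · refine le_trans (le_of_eq ?_) (hammingNorm_le_Mfun W₂ c₂ (fun i => x (Fin.natAdd n₁ i)))
    congr 1
    ext i
    simp [bdiag, Matrix.mulVec, dotProduct, Fin.sum_univ_add]

lemma Mfun_bdiag_zero_le {n₁ n₂ : ℕ} (W₁ : Matrix (Fin n₁) (Fin n₁) (ZMod 2))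
    (W₂ : Matrix (Fin n₂) (Fin n₂) (ZMod 2)) :
    Mfun (bdiag W₁ W₂) 0 ≤ Mfun W₁ 0 + Mfun W₂ 0 := by
  have h : Fin.append (0 : Fin n₁ → ZMod 2) (0 : Fin n₂ → ZMod 2) = 0 := by
    ext i
    refine Fin.addCases (fun i => ?_) (fun i => ?_) i <;> simp
  simpa only [h] using Mfun_bdiag_le W₁ W₂ 0 0

lemma Aset_nonempty (n : ℕ) {m : ℕ} (hm : 1 ≤ m) : (Aset n m).Nonempty := by
  refine ⟨1, fun i => Matrix.one_apply_eq i, fun j => le_trans (le_of_eq ?_) hm⟩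
  simp [hammingNorm, Matrix.one_apply, Finset.filter_eq']

lemma AstarSet_nonempty {n m : ℕ} (hm : 1 ≤ m) (hn : m ≤ n) : (AstarSet n m).Nonempty := by
  have h : ∀ j : Fin n, ∃ s : Finset (Fin n), {j} ⊆ s ∧ s.card = m := fun j => by
    obtain ⟨s, h₁, -, h₂⟩ := Finset.exists_subsuperset_card_eq
      (Finset.subset_univ ({j} : Finset (Fin n))) (by simpa using hm) (by simpa using hn)
    exact ⟨s, h₁, h₂⟩
  choose s hs hc using h
  refine ⟨fun i j => if i ∈ s j then 1 else 0, fun i => if_pos (hs i (by simp)), fun j => ?_⟩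
  simp [hammingNorm, hc]

/-- Corollary 3.3: sublinearity of `μ(·,m)`, `ν(·,m)`, `μ*(·,m)`, `ν*(·,m)`. -/
theorem all_sublinear (m : ℕ) (hm : 1 ≤ m) :
    (∀ n₁ n₂ : ℕ, 1 ≤ n₁ → 1 ≤ n₂ →
      mu (n₁ + n₂) m ≤ mu n₁ m + mu n₂ m ∧
      nu (n₁ + n₂) m ≤ nu n₁ m + nu n₂ m) ∧
    (∀ n₁ n₂ : ℕ, m ≤ n₁ → m ≤ n₂ →
      muStar (n₁ + n₂) m ≤ muStar n₁ m + muStar n₂ m ∧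
      nuStar (n₁ + n₂) m ≤ nuStar n₁ m + nuStar n₂ m) := by
  refine ⟨fun n₁ n₂ _ _ => ⟨?_, ?_⟩, fun n₁ n₂ h₁ h₂ => ⟨?_, ?_⟩⟩
  · obtain ⟨W₁, hW₁, e₁⟩ := Nat.sInf_mem ((Aset_nonempty n₁ hm).image fun W => Mfun W 0)
    obtain ⟨W₂, hW₂, e₂⟩ := Nat.sInf_mem ((Aset_nonempty n₂ hm).image fun W => Mfun W 0)
    simp only [mu, ← e₁, ← e₂]
    exact le_trans (Nat.sInf_le (by exact ⟨_, bdiag_mem_Aset hW₁ hW₂, rfl⟩)) (Mfun_bdiag_zero_le W₁ W₂)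
  · have key : ∀ n, ∃ W ∈ Aset n m, ∃ c, Mfun W c = nu n m := fun n => by
      obtain ⟨W, hW⟩ := Aset_nonempty n hm
      exact Nat.sInf_mem (s := {t | ∃ W ∈ Aset n m, ∃ c, Mfun W c = t}) ⟨_, W, hW, 0, rfl⟩
    obtain ⟨W₁, hW₁, c₁, e₁⟩ := key n₁
    obtain ⟨W₂, hW₂, c₂, e₂⟩ := key n₂
    rw [← e₁, ← e₂]
    exact le_trans (Nat.sInf_le (by exact ⟨_, bdiag_mem_Aset hW₁ hW₂, _, rfl⟩)) (Mfun_bdiag_le W₁ W₂ c₁ c₂)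
  · obtain ⟨W₁, hW₁, e₁⟩ := Nat.sInf_mem ((AstarSet_nonempty hm h₁).image fun W => Mfun W 0)
    obtain ⟨W₂, hW₂, e₂⟩ := Nat.sInf_mem ((AstarSet_nonempty hm h₂).image fun W => Mfun W 0)
    simp only [muStar, ← e₁, ← e₂]
    exact le_trans (Nat.sInf_le (by exact ⟨_, bdiag_mem_AstarSet hW₁ hW₂, rfl⟩)) (Mfun_bdiag_zero_le W₁ W₂)
  · have key : ∀ n, m ≤ n → ∃ W ∈ AstarSet n m, ∃ c, Mfun W c = nuStar n m := fun n hn => by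
      obtain ⟨W, hW⟩ := AstarSet_nonempty hm hn
      exact Nat.sInf_mem (s := {t | ∃ W ∈ AstarSet n m, ∃ c, Mfun W c = t}) ⟨_, W, hW, 0, rfl⟩
    obtain ⟨W₁, hW₁, c₁, e₁⟩ := key n₁ h₁
    obtain ⟨W₂, hW₂, c₂, e₂⟩ := key n₂ h₂
    rw [← e₁, ← e₂]
    exact le_trans (Nat.sInf_le (by exact ⟨_, bdiag_mem_AstarSet hW₁ hW₂, _, rfl⟩)) (Mfun_bdiag_le W₁ W₂ c₁ c₂)
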